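/- (Type-2 rows of the transition matrix of the transvection Markov chain on edge orbits.) Let a, b ∈ F with a ≠ 0, b ≠ 0 and Tr(a*b) = 0, and set u := (a, 0), v := (0, b) (a representative type-2 edge with orbit invariant a*b ≠ 0). Then for every y ∈ F with Tr(y) = 0, the number of h ∈ F × F with h ≠ (0,0) and det(τ_h(u), τ_h(v)) = y equals 4^(m−1) + 3·2^(m−1) − 1 if y = a*b, and equals 3·2^(m−1) if y ≠ a*b. (In particular, taking y = 0, exactly 3·2^(m−1) = 3N/2 transvections send a type-2 edge into the type-1 edges, so each row sum of the block R is 6N.) -/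

import Mathlib

open scoped Classical

theorem aux_trace_card (m : ℕ) (hm : 1 ≤ m) (F : Type) [Field F] [Fintype F]
    (hF : Fintype.card F = 2 ^ m) (T : F →+ ZMod 2) (hT : Function.Surjective T) :
    (Finset.univ.filter fun x : F => T x = 0).card = 2 ^ (m - 1) ∧
    (Finset.univ.filter fun x : F => T x = 1).card = 2 ^ (m - 1) := by
  obtain ⟨c, hc⟩ := hT 1
  have h01 : (Finset.univ.filter fun x : F => T x = 0).card =
      (Finset.univ.filter fun x : F => T x = 1).card := by
    apply Finset.card_bij (fun x _ => x + c)
    · intro x hx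
      simp only [Finset.mem_filter, Finset.mem_univ, true_and] at hx ⊢
      rw [map_add, hx, hc, zero_add]
    · intro x _ y _ h
      exact add_right_cancel h
    · intro x hx
      refine ⟨x - c, ?_, by simp⟩
      simp only [Finset.mem_filter, Finset.mem_univ, true_and] at hx ⊢
      rw [map_sub, hx, hc, sub_self]
  have hsum := Finset.card_filter_add_card_filter_not (s := (Finset.univ : Finset F))
    (fun x => T x = 0)
  have hne : (Finset.univ.filter fun x : F => ¬ T x = 0) =
      (Finset.univ.filter fun x : F => T x = 1) := by
    ext x
    simp only [Finset.mem_filter, Finset.mem_univ, true_and]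
    generalize T x = w
    revert w
    decide
  rw [hne, Finset.card_univ, hF] at hsum
  have hp : 2 ^ m = 2 * 2 ^ (m - 1) := by
    rw [← pow_succ', Nat.sub_add_cancel hm]
  omega

theorem aux_count (m : ℕ) (hm : 1 ≤ m) (F : Type) [Field F] [Fintype F] [CharP F 2]
    (hF : Fintype.card F = 2 ^ m) (T : F →+ ZMod 2) (hT : Function.Surjective T)
    (g : ZMod 2 →+* F) (z : F) (hz : T z = 0) :
    (Finset.univ.filter fun p : F × F =>
      p ≠ (0, 0) ∧ g (T p.1) * p.2 + g (T p.2) * p.1 = z).card =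
    if z = 0 then 4 ^ (m - 1) + 3 * 2 ^ (m - 1) - 1 else 3 * 2 ^ (m - 1) := by
  obtain ⟨h0, h1⟩ := aux_trace_card m hm F hF T hT
  set A0 := Finset.univ.filter fun x : F => T x = 0 with hA0
  set A1 := Finset.univ.filter fun x : F => T x = 1 with hA1
  have m0 : ∀ x, x ∈ A0 ↔ T x = 0 := by simp [hA0]
  have m1 : ∀ x, x ∈ A1 ↔ T x = 1 := by simp [hA1]
  have h10 : (1 : ZMod 2) ≠ 0 := by decide
  have w01 : ∀ w : ZMod 2, w = 0 ∨ w = 1 := by decide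
  have hadd : ∀ s t : F, t + s = z ↔ t = s + z := by
    intro s t
    constructor
    · rintro rfl
      rw [add_comm t s, ← add_assoc, CharTwo.add_self_eq_zero, zero_add]
    · rintro rfl
      rw [add_comm s z, add_assoc, CharTwo.add_self_eq_zero, add_zero]
  let B : Finset (F × F) := if z = 0 then (A0 ×ˢ A0).erase (0, 0) else ∅
  let I : Finset (F × F) := A1.image fun s => (s, s + z)
  have key : (Finset.univ.filter fun p : F × F =>
      p ≠ (0, 0) ∧ g (T p.1) * p.2 + g (T p.2) * p.1 = z) =
      B ∪ (A1 ×ˢ {z} ∪ ({z} ×ˢ A1 ∪ I)) := by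
    ext ⟨s, t⟩
    have hB : (s, t) ∈ B ↔ z = 0 ∧ (s, t) ≠ (0, 0) ∧ T s = 0 ∧ T t = 0 := by
      by_cases hz0 : z = 0 <;> simp [B, hz0, m0]
    have hI : (s, t) ∈ I ↔ T s = 1 ∧ t = s + z := by
      simp only [I, Finset.mem_image, m1, Prod.mk.injEq]
      constructor
      · rintro ⟨x, hx, rfl, rfl⟩
        exact ⟨hx, rfl⟩
      · rintro ⟨hs, rfl⟩
        exact ⟨s, hs, rfl, rfl⟩
    simp only [Finset.mem_filter, Finset.mem_univ, true_and, Finset.mem_union, hB, hI,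
      Finset.mem_product, Finset.mem_singleton, m1]
    have hn : T s = 1 ∨ T t = 1 → (s, t) ≠ (0, 0) := by
      rintro h hst
      simp only [Prod.mk.injEq] at hst
      rw [hst.1, hst.2, map_zero] at h
      simp at h
    rcases w01 (T s) with hs | hs <;> rcases w01 (T t) with ht | ht
    · simp only [hs, ht, map_zero, zero_mul, add_zero, h10.symm, false_and, and_false, or_false,
        and_true]
      rw [and_comm, eq_comm]
    · have := hn (Or.inr ht)
      simp [hs, ht, this]
    · have := hn (Or.inl hs)
      simp only [hs, ht, map_zero, map_one, zero_mul, one_mul, add_zero, h10, h10.symm,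
        and_false, false_or, true_and, false_and, this, ne_eq, not_false_eq_true]
      constructor
      · intro h
        exact Or.inl h
      · rintro (h | h)
        · exact h
        · rw [h, map_add, hs, hz] at ht
          exact absurd ht (by decide)
    · have := hn (Or.inl hs)
      have hsz : s ≠ z := by
        rintro rfl
        rw [hs] at hz
        exact h10 hz
      have htz : t ≠ z := by
        rintro rfl
        rw [ht] at hz
        exact h10 hz
      simp [hs, ht, this, hsz, htz, hadd]
  have dI : Disjoint ({z} ×ˢ A1) I := by
    rw [Finset.disjoint_left]
    rintro ⟨s, t⟩ h h'
    simp only [I, Finset.mem_image, m1, Prod.mk.injEq, Finset.mem_product,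
      Finset.mem_singleton] at h h'
    obtain ⟨x, hx, rfl, rfl⟩ := h'
    rw [h.1, hz] at hx
    exact h10 hx.symm
  have d2 : Disjoint (A1 ×ˢ {z}) ({z} ×ˢ A1 ∪ I) := by
    rw [Finset.disjoint_left]
    rintro ⟨s, t⟩ h h'
    simp only [I, Finset.mem_image, m1, Prod.mk.injEq, Finset.mem_product, Finset.mem_union,
      Finset.mem_singleton] at h h'
    obtain ⟨hs, rfl⟩ := h
    rcases h' with h' | ⟨x, hx, rfl, h'⟩
    · rw [hz] at h'
      exact h10 h'.2.symm
    · have : x = 0 := by simpa using h'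
      rw [this, map_zero] at hx
      exact h10 hx.symm
  have d3 : Disjoint B (A1 ×ˢ {z} ∪ ({z} ×ˢ A1 ∪ I)) := by
    rw [Finset.disjoint_left]
    rintro ⟨s, t⟩ h h'
    have hB : T s = 0 ∧ T t = 0 := by
      by_cases hz0 : z = 0
      · simp [B, hz0, m0] at h
        exact h.2
      · simp [B, hz0] at h
    simp only [I, Finset.mem_image, m1, Prod.mk.injEq, Finset.mem_product, Finset.mem_union,
      Finset.mem_singleton] at h'
    rcases h' with h' | h' | ⟨x, hx, rfl, h'⟩
    · exact h10 (h'.1.symm.trans hB.1)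
    · exact h10 (h'.2.symm.trans hB.2)
    · exact h10 (hx.symm.trans hB.1)
  have cI : I.card = 2 ^ (m - 1) := by
    rw [← h1]
    apply Finset.card_image_of_injective
    intro x x' h
    exact (Prod.mk.inj h).1
  rw [key, Finset.card_union_of_disjoint d3, Finset.card_union_of_disjoint d2,
    Finset.card_union_of_disjoint dI, cI, Finset.card_product, Finset.card_product, h1,
    Finset.card_singleton]
  by_cases hz0 : z = 0
  · have hmem : ((0 : F), (0 : F)) ∈ A0 ×ˢ A0 := by simp [m0]
    have h4 : 4 ^ (m - 1) = 2 ^ (m - 1) * 2 ^ (m - 1) := by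
      rw [← mul_pow]
      norm_num
    have hpos : 0 < 2 ^ (m - 1) * 2 ^ (m - 1) := by positivity
    simp only [B, hz0, if_true]
    rw [Finset.card_erase_of_mem hmem, Finset.card_product, h0, h4]
    omega
  · simp only [B, hz0, if_false, Finset.card_empty]
    omega

theorem stmt_15 (m : ℕ) (hm : 1 ≤ m)
    (Tr : GaloisField 2 m → ZMod 2)
    (hTr : Tr = Algebra.trace (ZMod 2) (GaloisField 2 m))
    (τ : (GaloisField 2 m × GaloisField 2 m) →
      (GaloisField 2 m × GaloisField 2 m) →
      (GaloisField 2 m × GaloisField 2 m))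
    (hτ : ∀ h x, τ h x = x +
      (algebraMap (ZMod 2) (GaloisField 2 m) (Tr (x.1 * h.2 + x.2 * h.1))) • h)
    (det : (GaloisField 2 m × GaloisField 2 m) →
      (GaloisField 2 m × GaloisField 2 m) → GaloisField 2 m)
    (hdet : ∀ u v, det u v = u.1 * v.2 + u.2 * v.1)
    (a b : GaloisField 2 m) (ha : a ≠ 0) (hb : b ≠ 0) (hab : Tr (a * b) = 0)
    (y : GaloisField 2 m) (hy : Tr y = 0) :
    Nat.card {h : GaloisField 2 m × GaloisField 2 m //
      h ≠ (0, 0) ∧ det (τ h (a, 0)) (τ h (0, b)) = y} =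
    if y = a * b then 4 ^ (m - 1) + 3 * 2 ^ (m - 1) - 1
    else 3 * 2 ^ (m - 1) := by
  have hm0 : m ≠ 0 := by omega
  haveI : Fintype (GaloisField 2 m) := Fintype.ofFinite _
  haveI : CharP (GaloisField 2 m) 2 := inferInstance
  have hF : Fintype.card (GaloisField 2 m) = 2 ^ m := by
    rw [← Nat.card_eq_fintype_card, GaloisField.card 2 m hm0]
  have hsurj : Function.Surjective
      (Algebra.trace (ZMod 2) (GaloisField 2 m)).toAddMonoidHom :=
    Algebra.trace_surjective (ZMod 2) (GaloisField 2 m)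
  have hz : (Algebra.trace (ZMod 2) (GaloisField 2 m)).toAddMonoidHom (y + a * b) = 0 := by
    rw [map_add]
    rw [hTr] at hy hab
    exact (congrArg₂ (· + ·) hy hab).trans (add_zero 0)
  have hc := aux_count m hm (GaloisField 2 m) hF _ hsurj
    (algebraMap (ZMod 2) (GaloisField 2 m)) (y + a * b) hz
  have hyz : y + a * b = 0 ↔ y = a * b := CharTwo.add_eq_zero
  simp only [hyz] at hc
  rw [← hc, ← Fintype.card_subtype, ← Nat.card_eq_fintype_card]
  apply Nat.card_congr
  refine Equiv.subtypeEquiv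
    (Equiv.prodCongr (Equiv.mulLeft₀ b hb) (Equiv.mulLeft₀ a ha)) ?_
  have hE : ∀ (c : GaloisField 2 m) (hc : c ≠ 0) (x : GaloisField 2 m),
      Equiv.mulLeft₀ c hc x = c * x := fun _ _ _ => rfl
  rintro ⟨s, t⟩
  simp only [hdet, hτ, hTr, Equiv.prodCongr_apply, Prod.map_apply, hE,
    LinearMap.toAddMonoidHom_coe, ne_eq, Prod.mk.injEq, mul_eq_zero, ha, hb, false_or,
    Prod.fst_add, Prod.snd_add, Prod.smul_fst, Prod.smul_snd, smul_eq_mul, zero_mul, add_zero,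
    zero_add]
  refine and_congr Iff.rfl ?_
  generalize algebraMap (ZMod 2) (GaloisField 2 m) _ = p
  generalize algebraMap (ZMod 2) (GaloisField 2 m) _ = q
  have h2 : (2 : GaloisField 2 m) = 0 := CharTwo.two_eq_zero
  constructor
  · intro h
    linear_combination h - (a * b + p * s * (q * t)) * h2
  · intro h
    linear_combination h + (a * b + p * s * (q * t)) * h2
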